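/- arXiv:0707.2333 — 2 statements merged into one kernel-verified Lean document; each statement's English description precedes it below -/
import Mathlib

section
/- Under hypotheses (MP1),(MP2),(MP3) and s(n),t(n) = O(n): for any noncrossing pair partition p of {1,...,2k}, the set S_n^∧(p) := S_n(p) \ S_n^∨(p) has cardinality o(n^{k+1}), where S_n^∨(p) consists of pairs (φ,ψ) with φ constant on the blocks of p ∨ m and ψ constant on the blocks of p ∨ n. -/
/-- A partition (as a setoid) of `Fin N` is a pair partition if every block has two elements. -/
def IsPairPartition {N : ℕ} (p : Setoid (Fin N)) : Prop :=
  ∀ c ∈ p.classes, c.ncard = 2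

/-- A partition of `Fin N` is noncrossing if there are no `p1 < q1 < p2 < q2` with
`p1 ~ p2`, `q1 ~ q2` but `p1 ≁ q1`. -/
def IsNoncrossing {N : ℕ} (p : Setoid (Fin N)) : Prop :=
  ¬ ∃ p1 q1 p2 q2 : Fin N, p1 < q1 ∧ q1 < p2 ∧ p2 < q2 ∧
      p.r p1 p2 ∧ p.r q1 q2 ∧ ¬ p.r p1 q1

/-- The pair partition `{{1,2},{3,4},…,{2k-1,2k}}` (0-indexed: `{0,1},{2,3},…`). -/
def mSetoid (k : ℕ) : Setoid (Fin (2 * k)) :=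
  Setoid.ker (fun i => i.val / 2)

/-- The cyclic pair partition `{{2,3},{4,5},…,{2k,1}}` (0-indexed: `{1,2},{3,4},…,{2k-1,0}`). -/
def nSetoid (k : ℕ) : Setoid (Fin (2 * k)) :=
  Setoid.ker (fun i => ((i.val + 1) / 2) % k)

open Filter

lemma pair_exists {N : ℕ} {p : Setoid (Fin N)} (h : IsPairPartition p) (x : Fin N) :
    ∃ y, y ≠ x ∧ p.r x y := by
  have hc := h {y | p.r y x} (Setoid.mem_classes p x)
  obtain ⟨u, v, huv, he⟩ := Set.ncard_eq_two.mp hc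
  have hx : x ∈ ({u, v} : Set (Fin N)) := he ▸ (p.refl' x : p.r x x)
  have hu : p.r u x := by
    have : u ∈ {y | p.r y x} := by rw [he]; simp
    exact this
  have hv : p.r v x := by
    have : v ∈ {y | p.r y x} := by rw [he]; simp
    exact this
  rcases hx with rfl | hx
  · exact ⟨v, huv.symm, p.symm' hv⟩
  · have hx' : x = v := hx
    subst hx'
    exact ⟨u, huv, p.symm' hu⟩

lemma pair_unique {N : ℕ} {p : Setoid (Fin N)} (h : IsPairPartition p) {x y z : Fin N}
    (hy : p.r x y) (hz : p.r x z) (hyx : y ≠ x) (hzx : z ≠ x) : y = z := by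
  have hc := h {y | p.r y x} (Setoid.mem_classes p x)
  obtain ⟨u, v, huv, he⟩ := Set.ncard_eq_two.mp hc
  have hx : x ∈ ({u, v} : Set (Fin N)) := he ▸ (p.refl' x : p.r x x)
  have h1 : y ∈ ({u, v} : Set (Fin N)) := he ▸ (p.symm' hy : p.r y x)
  have h2 : z ∈ ({u, v} : Set (Fin N)) := he ▸ (p.symm' hz : p.r z x)
  simp only [Set.mem_insert_iff, Set.mem_singleton_iff] at hx h1 h2
  grind

lemma interval_aux {k : ℕ} {p : Setoid (Fin (2 * k))} (hpair : IsPairPartition p)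
    (hnc : IsNoncrossing p) {α β : Type*} (φ : Fin (2 * k) → α) (ψ : Fin (2 * k) → β)
    (hφ : ∀ i j, (mSetoid k).r i j → φ i = φ j)
    (hψ : ∀ i j, (nSetoid k).r i j → ψ i = ψ j) :
    ∀ (d : ℕ) (a b : Fin (2 * k)), a ≤ b → b.val - a.val = d →
      (∀ x y, a ≤ x → x < b → p.r x y → a ≤ y ∧ y < b) →
      (∀ x y, a ≤ x → x < b → p.r x y → φ x = φ y ∧ ψ x = ψ y) →
      (b.val - a.val) % 2 = 0 ∧ (a.val % 2 = 1 → φ a = φ b) ∧ (a.val % 2 = 0 → ψ a = ψ b) := by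
  intro d
  induction d using Nat.strong_induction_on with
  | _ d ih =>
    intro a b hab hd hcl hgood
    rcases eq_or_lt_of_le hab with rfl | hlt
    · simp
    obtain ⟨a', ha'ne, haa'⟩ := pair_exists hpair a
    obtain ⟨h1, h2⟩ := hcl a a' le_rfl hlt haa'
    have h1' : a < a' := lt_of_le_of_ne h1 (Ne.symm ha'ne)
    have hltv : a.val < a'.val := h1'
    have hltb : a'.val < b.val := h2
    have hb := b.isLt
    have hnc' : ∀ p1 q1 p2 q2 : Fin (2 * k), p1 < q1 → q1 < p2 → p2 < q2 →
      p.r p1 p2 → p.r q1 q2 → p.r p1 q1 := by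
      intro p1 q1 p2 q2 e1 e2 e3 e4 e5
      by_contra hcon
      exact hnc ⟨p1, q1, p2, q2, e1, e2, e3, e4, e5, hcon⟩
    -- partner facts
    have hA : ∀ x, p.r a x → x = a ∨ x = a' := by
      intro x hx
      by_cases hxa : x = a
      · exact Or.inl hxa
      · exact Or.inr (pair_unique hpair hx haa' hxa ha'ne)
    have hA' : ∀ x, p.r x a → x = a ∨ x = a' := fun x hx => hA x (p.symm' hx)
    have hB' : ∀ x, p.r x a' → x = a ∨ x = a' := fun x hx =>
      hA x (p.trans' haa' (p.symm' hx))
    let c : Fin (2 * k) := ⟨a.val + 1, by omega⟩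
    let e : Fin (2 * k) := ⟨a'.val + 1, by omega⟩
    have I1 := ih (a'.val - c.val) (by simp only [c]; omega) c a'
      (by simp only [c, Fin.le_def]; omega) rfl
      (by
        intro x y hx hx' hxy
        have hxv : a.val + 1 ≤ x.val := hx
        have hxv' : x.val < a'.val := hx'
        have hxa : a < x := by simp only [Fin.lt_def]; omega
        obtain ⟨g1, g2⟩ := hcl x y hxa.le (hx'.trans h2) hxy
        have ya : y ≠ a := by
          rintro rfl
          rcases hA' x hxy with h | h <;> subst h <;> omega
        have ya' : y ≠ a' := by
          rintro rfl
          rcases hB' x hxy with h | h <;> subst h <;> omega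
        have g3 : a < y := lt_of_le_of_ne g1 (Ne.symm ya)
        refine ⟨?_, ?_⟩
        · have : a.val < y.val := g3
          simp only [c, Fin.le_def]; omega
        · by_contra hcon
          have g4 : a' < y := lt_of_le_of_ne (not_lt.mp hcon) (Ne.symm ya')
          rcases hA x (hnc' a x a' y hxa hx' g4 haa' hxy) with h | h <;> subst h <;> omega)
      (by
        intro x y hx hx' hxy
        have hxv : a.val + 1 ≤ x.val := hx
        exact hgood x y (by simp only [Fin.le_def]; omega) (hx'.trans h2) hxy)
    have I2 := ih (b.val - e.val) (by simp only [e]; omega) e b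
      (by simp only [e, Fin.le_def]; omega) rfl
      (by
        intro x y hx hx' hxy
        have hxv : a'.val + 1 ≤ x.val := hx
        have hxa : a' < x := by simp only [Fin.lt_def]; omega
        obtain ⟨g1, g2⟩ := hcl x y (h1.trans hxa.le) hx' hxy
        refine ⟨?_, g2⟩
        have ya : y ≠ a := by
          rintro rfl
          rcases hA' x hxy with h | h <;> subst h <;> omega
        have ya' : y ≠ a' := by
          rintro rfl
          rcases hB' x hxy with h | h <;> subst h <;> omega
        have g3 : a < y := lt_of_le_of_ne g1 (Ne.symm ya)
        by_contra hcon
        have g4 : y < a' := by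
          refine lt_of_le_of_ne ?_ ya'
          simp only [e, Fin.le_def] at hcon ⊢
          omega
        rcases hA y (hnc' a y a' x g3 g4 hxa haa' (p.symm' hxy)) with h | h
        · exact ya h
        · exact ya' h)
      (by
        intro x y hx hx' hxy
        have hxv : a'.val + 1 ≤ x.val := hx
        exact hgood x y (by simp only [Fin.le_def]; omega) hx' hxy)
    obtain ⟨I1a, -, -⟩ := I1
    obtain ⟨I2a, I2b, I2c⟩ := I2
    have hg := hgood a a' le_rfl hlt haa'
    simp only [c, e] at I1a I2a I2b I2c
    refine ⟨by omega, ?_, ?_⟩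
    · intro ho
      rw [hg.1, ← I2b (by omega)]
      apply hφ
      change a'.val / 2 = (a'.val + 1) / 2
      omega
    · intro ho
      rw [hg.2, ← I2c (by omega)]
      apply hψ
      change ((a'.val + 1) / 2) % k = ((a'.val + 1 + 1) / 2) % k
      congr 1
      omega

lemma innermost {k : ℕ} {p : Setoid (Fin (2 * k))} (hpair : IsPairPartition p)
    (hnc : IsNoncrossing p) {α β : Type*} (φ : Fin (2 * k) → α) (ψ : Fin (2 * k) → β)
    (hφ : ∀ i j, (mSetoid k).r i j → φ i = φ j)
    (hψ : ∀ i j, (nSetoid k).r i j → ψ i = ψ j) :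
    ∀ (d : ℕ) (i j : Fin (2 * k)), i < j → j.val - i.val = d → p.r i j →
      ¬ (φ i = φ j ∧ ψ i = ψ j) →
      ∃ i j, p.r i j ∧ ¬ (φ i = φ j ∧ ψ i = ψ j) ∧ (φ i = φ j ∨ ψ i = ψ j) := by
  intro d
  induction d using Nat.strong_induction_on with
  | _ d ih =>
    intro i j hij hd hp hbad
    have hijv : i.val < j.val := hij
    have hj := j.isLt
    have hnc' : ∀ p1 q1 p2 q2 : Fin (2 * k), p1 < q1 → q1 < p2 → p2 < q2 →
      p.r p1 p2 → p.r q1 q2 → p.r p1 q1 := by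
      intro p1 q1 p2 q2 e1 e2 e3 e4 e5
      by_contra hcon
      exact hnc ⟨p1, q1, p2, q2, e1, e2, e3, e4, e5, hcon⟩
    have hA : ∀ x, p.r i x → x = i ∨ x = j := by
      intro x hx
      by_cases hxa : x = i
      · exact Or.inl hxa
      · exact Or.inr (pair_unique hpair hx hp hxa hij.ne')
    have hA' : ∀ x, p.r x i → x = i ∨ x = j := fun x hx => hA x (p.symm' hx)
    have hB' : ∀ x, p.r x j → x = i ∨ x = j := fun x hx =>
      hA x (p.trans' hp (p.symm' hx))
    let c : Fin (2 * k) := ⟨i.val + 1, by omega⟩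
    have hcl : ∀ x y, c ≤ x → x < j → p.r x y → c ≤ y ∧ y < j := by
      intro x y hx hx' hxy
      have hxv : i.val + 1 ≤ x.val := hx
      have hxv' : x.val < j.val := hx'
      have hxi : i < x := by simp only [Fin.lt_def]; omega
      have yi : y ≠ i := by
        rintro rfl
        rcases hA' x hxy with h | h <;> subst h <;> omega
      have yj : y ≠ j := by
        rintro rfl
        rcases hB' x hxy with h | h <;> subst h <;> omega
      constructor
      · by_contra hcon
        have g : y < i := by
          refine lt_of_le_of_ne ?_ yi
          simp only [c, Fin.le_def] at hcon ⊢
          omega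
        rcases hA' y (hnc' y i x j g hxi hx' (p.symm' hxy) hp) with h | h
        · exact yi h
        · exact yj h
      · by_contra hcon
        have g4 : j < y := lt_of_le_of_ne (not_lt.mp hcon) (Ne.symm yj)
        rcases hA x (hnc' i x j y hxi hx' g4 hp hxy) with h | h <;> subst h <;> omega
    by_cases hgood : ∀ x y, c ≤ x → x < j → p.r x y → φ x = φ y ∧ ψ x = ψ y
    · obtain ⟨h1, h2, h3⟩ := interval_aux hpair hnc φ ψ hφ hψ _ c j
        (by simp only [c, Fin.le_def]; omega) rfl hcl hgood
      refine ⟨i, j, hp, hbad, ?_⟩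
      simp only [c] at h1 h2 h3
      rcases Nat.mod_two_eq_zero_or_one i.val with h | h
      · left
        rw [← h2 (by omega)]
        apply hφ
        change i.val / 2 = (i.val + 1) / 2
        omega
      · right
        rw [← h3 (by omega)]
        apply hψ
        change ((i.val + 1) / 2) % k = ((i.val + 1 + 1) / 2) % k
        congr 1
        omega
    · push Not at hgood
      obtain ⟨x, y, hx, hx', hxy, hb⟩ := hgood
      have hb' : ¬ (φ x = φ y ∧ ψ x = ψ y) := fun h => hb h.1 h.2
      obtain ⟨hy, hy'⟩ := hcl x y hx hx' hxy
      have e1 : i.val + 1 ≤ x.val := hx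
      have e2 : i.val + 1 ≤ y.val := hy
      have e3 : x.val < j.val := hx'
      have e4 : y.val < j.val := hy'
      rcases lt_trichotomy x y with h | h | h
      · exact ih (y.val - x.val) (by omega) x y h rfl hxy hb'
      · subst h
        exact absurd ⟨rfl, rfl⟩ hb'
      · exact ih (x.val - y.val) (by omega) y x h rfl (p.symm' hxy)
          (fun hh => hb' ⟨hh.1.symm, hh.2.symm⟩)

open Classical in
/-- restriction of a configuration to the revealed positions -/
noncomputable def restr {M : ℕ} {α : Type*} (S : Finset (Fin M)) (x : Fin M → α) :
    Fin M → Option α := fun i => if i ∈ S then some (x i) else none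

open Classical in
lemma reveal_step {M : ℕ} {α : Type*} (X : Finset (Fin M → α)) (S : Finset (Fin M))
    (e : Fin M) (c : ℕ)
    (h : ∀ x ∈ X, ∃ F : Finset α, F.card ≤ c ∧
      ∀ y ∈ X, (∀ i ∈ S, y i = x i) → y e ∈ F) :
    (X.image (restr (insert e S))).card ≤ c * (X.image (restr S)).card := by
  let f : (Fin M → Option α) → (Fin M → Option α) := fun z i => if i ∈ S then z i else none
  have hf : ∀ x : Fin M → α, f (restr (insert e S) x) = restr S x := by
    intro x
    funext i
    by_cases hi : i ∈ S <;> simp [f, restr, hi]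
  have himg : (X.image (restr (insert e S))).image f = X.image (restr S) := by
    rw [Finset.image_image]
    exact Finset.image_congr (fun x _ => hf x)
  rw [← himg]
  refine Finset.card_le_mul_card_image _ _ ?_
  intro b hb
  rw [himg] at hb
  obtain ⟨x, hx, rfl⟩ := Finset.mem_image.mp hb
  obtain ⟨F, hFc, hF⟩ := h x hx
  refine le_trans ?_ hFc
  refine le_trans (Finset.card_le_card (t := F.image
    (fun a i => if i = e then some a else restr S x i)) ?_) Finset.card_image_le
  intro z hz
  rw [Finset.mem_filter] at hz
  obtain ⟨hz1, hz2⟩ := hz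
  obtain ⟨y, hy, rfl⟩ := Finset.mem_image.mp hz1
  rw [hf] at hz2
  rw [Finset.mem_image]
  refine ⟨y e, hF y hy ?_, ?_⟩
  · intro i hi
    have := congrFun hz2 i
    simpa [restr, hi] using this
  · funext i
    by_cases hie : i = e
    · simp [restr, hie]
    · rw [← hz2]
      simp [restr, hie]

/-- cyclic position -/
def cpos {M : ℕ} (hM : 0 < M) (r : ℕ) : Fin M := ⟨r % M, Nat.mod_lt _ hM⟩

open Classical in
lemma reveal_all {M : ℕ} (hM : 0 < M) {α : Type*} (X : Finset (Fin M → α))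
    (p : Setoid (Fin M)) (i j : Fin M) (hij : p.r i j) (D n T : ℕ)
    (h0 : ∃ G : Finset (Fin M → Option α), G.card ≤ T ∧ ∀ x ∈ X, restr {i, j} x ∈ G)
    (h1 : ∀ r, ∀ a : α, ∃ F : Finset α, F.card ≤ D * n ∧
      ∀ y ∈ X, y (cpos hM r) = a → y (cpos hM (r + 1)) ∈ F)
    (h2 : ∀ r f, p.r f (cpos hM (r + 1)) → ∀ a c : α, ∃ F : Finset α, F.card ≤ D ∧
      ∀ y ∈ X, y (cpos hM r) = a → y f = c → y (cpos hM (r + 1)) ∈ F) :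
    X.card * n ≤ T * D ^ M * n ^ (Finset.univ.image (Quotient.mk p)).card := by
  have h0 : (X.image (restr {i, j})).card ≤ T := by
    obtain ⟨G, hG, hG'⟩ := h0
    exact (Finset.card_le_card (Finset.image_subset_iff.mpr hG')).trans hG
  have key : ∀ r : ℕ, ∃ S : Finset (Fin M), i ∈ S ∧ (∀ q ≤ r, cpos hM (i.val + q) ∈ S) ∧
      (X.image (restr S)).card * n ≤ T * D ^ r * n ^ (S.image (Quotient.mk p)).card := by
    intro r
    induction r with
    | zero =>
      refine ⟨{i, j}, by simp, ?_, ?_⟩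
      · intro q hq
        have : q = 0 := by omega
        subst this
        have : cpos hM (i.val + 0) = i := by
          apply Fin.ext
          simp [cpos, Nat.mod_eq_of_lt i.isLt]
        rw [this]; simp
      · have : (({i, j} : Finset (Fin M)).image (Quotient.mk p)).card = 1 := by
          have : Quotient.mk p i = Quotient.mk p j := Quotient.sound hij
          rw [Finset.image_insert, Finset.image_singleton, this]
          simp
        rw [this]
        simpa using Nat.mul_le_mul_right n h0
    | succ r ih =>
      obtain ⟨S, hiS, hS, hcard⟩ := ih
      have hr := hS r le_rfl
      set e := cpos hM (i.val + r + 1) with he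
      refine ⟨insert e S, by simp [hiS], ?_, ?_⟩
      · intro q hq
        rcases Nat.lt_or_ge r q with h | h
        · have : q = r + 1 := by omega
          subst this
          rw [← Nat.add_assoc]
          simp [he]
        · exact Finset.mem_insert_of_mem (hS q h)
      · rw [Finset.image_insert]
        by_cases hc : Quotient.mk p e ∈ S.image (Quotient.mk p)
        · obtain ⟨f, hf, hfe⟩ := Finset.mem_image.mp hc
          have hfe' : p.r f e := Quotient.exact hfe
          have hstep := reveal_step X S e D (by
            intro x hx
            obtain ⟨F, hF, hF'⟩ := h2 (i.val + r) f hfe' (x (cpos hM (i.val + r))) (x f)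
            exact ⟨F, hF, fun y hy hyx => hF' y hy (hyx _ hr) (hyx _ hf)⟩)
          rw [Finset.insert_eq_of_mem hc]
          calc _ ≤ D * (X.image (restr S)).card * n := Nat.mul_le_mul_right n hstep
            _ = D * ((X.image (restr S)).card * n) := by ring
            _ ≤ D * (T * D ^ r * n ^ (S.image (Quotient.mk p)).card) :=
              Nat.mul_le_mul_left _ hcard
            _ = _ := by ring
        · have hstep := reveal_step X S e (D * n) (by
            intro x hx
            obtain ⟨F, hF, hF'⟩ := h1 (i.val + r) (x (cpos hM (i.val + r)))
            exact ⟨F, hF, fun y hy hyx => hF' y hy (hyx _ hr)⟩)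
          rw [Finset.card_insert_of_notMem hc]
          calc _ ≤ D * n * (X.image (restr S)).card * n := Nat.mul_le_mul_right n hstep
            _ = D * n * ((X.image (restr S)).card * n) := by ring
            _ ≤ D * n * (T * D ^ r * n ^ (S.image (Quotient.mk p)).card) :=
              Nat.mul_le_mul_left _ hcard
            _ = _ := by ring
  obtain ⟨S, -, hS, hc⟩ := key M
  have hU : S = Finset.univ := by
    rw [Finset.eq_univ_iff_forall]
    intro x
    have hx := x.isLt
    have hi := i.isLt
    rcases le_or_gt i.val x.val with h | h
    · convert hS (x.val - i.val) (by omega)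
      apply Fin.ext
      simp only [cpos]
      rw [show i.val + (x.val - i.val) = x.val by omega, Nat.mod_eq_of_lt hx]
    · convert hS (x.val + M - i.val) (by omega)
      apply Fin.ext
      simp only [cpos]
      rw [show i.val + (x.val + M - i.val) = x.val + M by omega, Nat.add_mod_right,
        Nat.mod_eq_of_lt hx]
  subst hU
  rw [Finset.card_image_of_injective] at hc
  · exact hc
  · intro x y hxy
    funext q
    have := congrFun hxy q
    simpa [restr] using this

open Classical in
lemma classes_card {k : ℕ} {p : Setoid (Fin (2 * k))} (hpair : IsPairPartition p) :
    ((Finset.univ : Finset (Fin (2 * k))).image (Quotient.mk p)).card ≤ k := by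
  have h := Finset.mul_card_image_le_card (Finset.univ : Finset (Fin (2 * k)))
    (f := Quotient.mk p) 2 (by
      intro a ha
      obtain ⟨x, -, rfl⟩ := Finset.mem_image.mp ha
      obtain ⟨y, hy, hxy⟩ := pair_exists hpair x
      refine (Finset.card_pair hy).symm.le.trans (Finset.card_le_card ?_)
      intro z hz
      simp only [Finset.mem_insert, Finset.mem_singleton] at hz
      simp only [Finset.mem_filter, Finset.mem_univ, true_and]
      rcases hz with rfl | rfl
      · exact Quotient.sound (p.symm' hxy)
      · rfl)
  simp at h
  omega

open Classical in
lemma count_fixed (k : ℕ) (hk : 1 ≤ k) (s t n C B : ℕ) (R : Setoid (Fin s × Fin t))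
    (hn : 1 ≤ n) (hs : s ≤ C * n) (ht : t ≤ C * n)
    (hMP2 : ∀ (a : Fin s) (q : Fin t) (a' : Fin s),
        {q' : Fin t | R.r (a, q) (a', q')}.ncard ≤ B)
    (hMP2' : ∀ (a : Fin s) (q q' : Fin t),
        {a' : Fin s | R.r (a, q) (a', q')}.ncard ≤ B)
    (p : Setoid (Fin (2 * k))) (hpair : IsPairPartition p)
    (i j : Fin (2 * k)) (hij : p.r i j) (X : Finset (Fin (2 * k) → Fin s × Fin t))
    (hX : ∀ g ∈ X, (∀ e e', (mSetoid k).r e e' → (g e).1 = (g e').1) ∧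
      (∀ e e', (nSetoid k).r e e' → (g e).2 = (g e').2) ∧
      (∀ e e', p.r e e' → R.r (g e) (g e')) ∧
      ¬ ((g i).1 = (g j).1 ∧ (g i).2 = (g j).2) ∧
      ((g i).1 = (g j).1 ∨ (g i).2 = (g j).2)) :
    X.card * n ≤ ({x : Fin s × Fin t × Fin t |
            x.2.1 ≠ x.2.2 ∧ R.r (x.1, x.2.1) (x.1, x.2.2)}.ncard +
        {x : Fin s × Fin s × Fin t |
            x.1 ≠ x.2.1 ∧ R.r (x.1, x.2.2) (x.2.1, x.2.2)}.ncard) *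
      (B + C + 1) ^ (2 * k) * n ^ k := by
  have hM : 0 < 2 * k := by omega
  have hnext : ∀ r, (mSetoid k).r (cpos hM r) (cpos hM (r + 1)) ∨
      (nSetoid k).r (cpos hM r) (cpos hM (r + 1)) := by
    intro r
    have hlt : r % (2 * k) < 2 * k := Nat.mod_lt _ hM
    have hsucc : (r + 1) % (2 * k) = if r % (2 * k) + 1 = 2 * k then 0 else r % (2 * k) + 1 := by
      rw [Nat.add_mod_eq_ite]
      rcases Nat.lt_or_ge 1 (2 * k) with h | h
      · rw [Nat.mod_eq_of_lt h]
        split_ifs <;> omega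
      · omega
    change (r % (2 * k)) / 2 = ((r + 1) % (2 * k)) / 2 ∨
      ((r % (2 * k) + 1) / 2) % k = (((r + 1) % (2 * k) + 1) / 2) % k
    rw [hsucc]
    generalize r % (2 * k) = u at *
    split_ifs with h
    · right
      rw [h]
      simp
    · rcases Nat.mod_two_eq_zero_or_one u with h' | h'
      · left; omega
      · right; congr 1; omega
  refine le_trans (reveal_all hM X p i j hij (B + C + 1) n _ ?_ ?_ ?_)
    (Nat.mul_le_mul_left _ (Nat.pow_le_pow_right hn (classes_card hpair)))
  · -- initial pair
    set A : Set (Fin s × Fin t × Fin t) := {x | x.2.1 ≠ x.2.2 ∧ R.r (x.1, x.2.1) (x.1, x.2.2)}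
    set A' : Set (Fin s × Fin s × Fin t) := {x | x.1 ≠ x.2.1 ∧ R.r (x.1, x.2.2) (x.2.1, x.2.2)}
    let mk : Fin s × Fin t → Fin s × Fin t → (Fin (2 * k) → Option (Fin s × Fin t)) :=
      fun u v e => if e = i then some u else if e = j then some v else none
    refine ⟨(Set.toFinite A).toFinset.image (fun x => mk (x.1, x.2.1) (x.1, x.2.2)) ∪
        (Set.toFinite A').toFinset.image (fun x => mk (x.1, x.2.2) (x.2.1, x.2.2)), ?_, ?_⟩
    swap
    · intro g hg
      obtain ⟨-, -, h3, h4, h5⟩ := hX g hg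
      have hR := h3 i j hij
      have hz : restr {i, j} g = mk (g i) (g j) := by
        funext e
        by_cases h : e = i
        · simp [restr, mk, h]
        · by_cases h' : e = j
          · subst h'
            simp [restr, mk, h]
          · simp [restr, mk, h, h']
      rw [hz, Finset.mem_union, Finset.mem_image, Finset.mem_image]
      rcases h5 with h5 | h5
      · left
        refine ⟨((g i).1, (g i).2, (g j).2), ?_, ?_⟩
        · rw [Set.Finite.mem_toFinset]
          refine ⟨fun h => h4 ⟨h5, h⟩, ?_⟩
          change R.r ((g i).1, (g i).2) ((g i).1, (g j).2)
          rw [show ((g i).1, (g j).2) = g j from by rw [h5]]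
          exact hR
        · change mk ((g i).1, (g i).2) ((g i).1, (g j).2) = _
          rw [show ((g i).1, (g j).2) = g j from by rw [h5]]
      · right
        refine ⟨((g i).1, (g j).1, (g i).2), ?_, ?_⟩
        · rw [Set.Finite.mem_toFinset]
          refine ⟨fun h => h4 ⟨h, h5⟩, ?_⟩
          change R.r ((g i).1, (g i).2) ((g j).1, (g i).2)
          rw [show ((g j).1, (g i).2) = g j from by rw [h5]]
          exact hR
        · change mk ((g i).1, (g i).2) ((g j).1, (g i).2) = _
          rw [show ((g j).1, (g i).2) = g j from by rw [h5]]
    refine (Finset.card_union_le _ _).trans ?_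
    rw [Set.ncard_eq_toFinset_card A, Set.ncard_eq_toFinset_card A']
    exact Nat.add_le_add Finset.card_image_le Finset.card_image_le
  · intro r a
    have hCn : C * n ≤ (B + C + 1) * n := Nat.mul_le_mul_right n (by omega)
    rcases hnext r with h | h
    · refine ⟨Finset.univ.image (fun q : Fin t => (a.1, q)), ?_, ?_⟩
      · refine Finset.card_image_le.trans ?_
        simp; omega
      · intro y hy hya
        have := (hX y hy).1 _ _ h
        rw [Finset.mem_image]
        exact ⟨(y (cpos hM (r + 1))).2, Finset.mem_univ _, by rw [← hya, this]⟩
    · refine ⟨Finset.univ.image (fun q : Fin s => (q, a.2)), ?_, ?_⟩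
      · refine Finset.card_image_le.trans ?_
        simp; omega
      · intro y hy hya
        have := (hX y hy).2.1 _ _ h
        rw [Finset.mem_image]
        exact ⟨(y (cpos hM (r + 1))).1, Finset.mem_univ _, by rw [← hya, this]⟩
  · intro r f hf a c
    rcases hnext r with h | h
    · refine ⟨({q' : Fin t | R.r (c.1, c.2) (a.1, q')}.toFinset).image
        (fun q : Fin t => (a.1, q)), ?_, ?_⟩
      · refine Finset.card_image_le.trans ?_
        rw [← Set.ncard_eq_toFinset_card']
        exact (hMP2 c.1 c.2 a.1).trans (by omega)
      · intro y hy hya hyc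
        have h1 := (hX y hy).1 _ _ h
        have h2 := (hX y hy).2.2.1 _ _ hf
        have h3 : (a.1, (y (cpos hM (r + 1))).2) = y (cpos hM (r + 1)) := by rw [← hya, h1]
        rw [Finset.mem_image]
        refine ⟨(y (cpos hM (r + 1))).2, ?_, h3⟩
        rw [Set.mem_toFinset]
        change R.r c (a.1, (y (cpos hM (r + 1))).2)
        rw [h3, ← hyc]
        exact h2
    · refine ⟨({a' : Fin s | R.r (c.1, c.2) (a', a.2)}.toFinset).image
        (fun q : Fin s => (q, a.2)), ?_, ?_⟩
      · refine Finset.card_image_le.trans ?_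
        rw [← Set.ncard_eq_toFinset_card']
        exact (hMP2' c.1 c.2 a.2).trans (by omega)
      · intro y hy hya hyc
        have h1 := (hX y hy).2.1 _ _ h
        have h2 := (hX y hy).2.2.1 _ _ hf
        have h3 : ((y (cpos hM (r + 1))).1, a.2) = y (cpos hM (r + 1)) := by rw [← hya, h1]
        rw [Finset.mem_image]
        refine ⟨(y (cpos hM (r + 1))).1, ?_, h3⟩
        rw [Set.mem_toFinset]
        change R.r c ((y (cpos hM (r + 1))).1, a.2)
        rw [h3, ← hyc]
        exact h2

open Classical in
lemma count_bad (k : ℕ) (hk : 1 ≤ k) (s t n C B : ℕ) (R : Setoid (Fin s × Fin t))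
    (hn : 1 ≤ n) (hs : s ≤ C * n) (ht : t ≤ C * n)
    (hMP2 : ∀ (a : Fin s) (q : Fin t) (a' : Fin s),
        {q' : Fin t | R.r (a, q) (a', q')}.ncard ≤ B)
    (hMP2' : ∀ (a : Fin s) (q q' : Fin t),
        {a' : Fin s | R.r (a, q) (a', q')}.ncard ≤ B)
    (p : Setoid (Fin (2 * k))) (hpair : IsPairPartition p) (hnc : IsNoncrossing p) :
    {fp : (Fin (2 * k) → Fin s) × (Fin (2 * k) → Fin t) |
          ((∀ i j, (mSetoid k).r i j → fp.1 i = fp.1 j) ∧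
           (∀ i j, (nSetoid k).r i j → fp.2 i = fp.2 j) ∧
           (∀ i j, (R.r (fp.1 i, fp.2 i) (fp.1 j, fp.2 j) ↔ p.r i j))) ∧
          ¬ ((∀ i j, (p ⊔ mSetoid k).r i j → fp.1 i = fp.1 j) ∧
             (∀ i j, (p ⊔ nSetoid k).r i j → fp.2 i = fp.2 j))}.ncard * n ≤
     (Fintype.card (Fin (2 * k) × Fin (2 * k))) * (({x : Fin s × Fin t × Fin t |
            x.2.1 ≠ x.2.2 ∧ R.r (x.1, x.2.1) (x.1, x.2.2)}.ncard +
        {x : Fin s × Fin s × Fin t |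
            x.1 ≠ x.2.1 ∧ R.r (x.1, x.2.2) (x.2.1, x.2.2)}.ncard) *
      (B + C + 1) ^ (2 * k) * n ^ k) := by
  let X : Fin (2 * k) × Fin (2 * k) → Finset (Fin (2 * k) → Fin s × Fin t) := fun w =>
    Finset.univ.filter (fun g => p.r w.1 w.2 ∧
      (∀ e e', (mSetoid k).r e e' → (g e).1 = (g e').1) ∧
      (∀ e e', (nSetoid k).r e e' → (g e).2 = (g e').2) ∧
      (∀ e e', p.r e e' → R.r (g e) (g e')) ∧
      ¬ ((g w.1).1 = (g w.2).1 ∧ (g w.1).2 = (g w.2).2) ∧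
      ((g w.1).1 = (g w.2).1 ∨ (g w.1).2 = (g w.2).2))
  refine le_trans (Nat.mul_le_mul_right n (m := (Finset.univ.biUnion X).card) ?_) ?_
  · rw [← Set.ncard_coe_finset]
    refine Set.ncard_le_ncard_of_injOn (fun fp e => (fp.1 e, fp.2 e)) ?_ ?_ (Finset.finite_toSet _)
    · rintro ⟨φ, ψ⟩ ⟨⟨h1, h2, h3⟩, h4⟩
      simp only at h1 h2 h3 h4
      have hb : ∃ i j, p.r i j ∧ ¬ (φ i = φ j ∧ ψ i = ψ j) := by
        by_contra hcon
        push Not at hcon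
        apply h4
        have e1 : p ⊔ mSetoid k ≤ Setoid.ker φ :=
          sup_le (fun {x y} hxy => (hcon x y hxy).1) (fun {x y} hxy => h1 x y hxy)
        have e2 : p ⊔ nSetoid k ≤ Setoid.ker ψ :=
          sup_le (fun {x y} hxy => (hcon x y hxy).2) (fun {x y} hxy => h2 x y hxy)
        exact ⟨fun i j hij => e1 hij, fun i j hij => e2 hij⟩
      have hb2 : ∃ i j, p.r i j ∧ ¬ (φ i = φ j ∧ ψ i = ψ j) ∧ (φ i = φ j ∨ ψ i = ψ j) := by
        obtain ⟨i, j, hij, hbad⟩ := hb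
        rcases lt_trichotomy i j with h | h | h
        · exact innermost hpair hnc φ ψ h1 h2 _ i j h rfl hij hbad
        · subst h
          exact absurd ⟨rfl, rfl⟩ hbad
        · exact innermost hpair hnc φ ψ h1 h2 _ j i h rfl (p.symm' hij)
            (fun hh => hbad ⟨hh.1.symm, hh.2.symm⟩)
      obtain ⟨i, j, hij, hne, heq⟩ := hb2
      rw [Finset.mem_coe, Finset.mem_biUnion]
      refine ⟨(i, j), Finset.mem_univ _, ?_⟩
      rw [Finset.mem_filter]
      exact ⟨Finset.mem_univ _, hij, h1, h2, fun e e' h => (h3 e e').mpr h, hne, heq⟩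
    · rintro ⟨φ, ψ⟩ - ⟨φ', ψ'⟩ - h
      have h' : ∀ e, (φ e, ψ e) = (φ' e, ψ' e) := fun e => congrFun h e
      ext e
      · exact congrArg (fun z => z.1.val) (h' e)
      · exact congrArg (fun z => z.2.val) (h' e)
  · refine le_trans (Nat.mul_le_mul_right n Finset.card_biUnion_le) ?_
    rw [Finset.sum_mul, ← Finset.card_univ]
    refine Finset.sum_le_card_nsmul _ _ _ ?_
    intro w _
    by_cases hw : p.r w.1 w.2
    · refine count_fixed k hk s t n C B R hn hs ht hMP2 hMP2' p hpair w.1 w.2 hw (X w) ?_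
      intro g hg
      exact (Finset.mem_filter.mp hg).2.2
    · have : X w = ∅ := Finset.filter_eq_empty_iff.mpr (fun g _ h => hw h.1)
      rw [this]
      simp


/-- For a noncrossing pair partition `p` of `{1,…,2k}`, under (MP1), (MP2), (MP3) and
`s(n), t(n) = O(n)`, the set `S_n^∧(p) = S_n(p) \ S_n^∨(p)` has cardinality
`o(n^{k+1})`, where `S_n^∨(p)` consists of those `(φ,ψ) ∈ S_n(p)` with `φ` constant on
the blocks of `p ∨ m` and `ψ` constant on the blocks of `p ∨ n`. -/
theorem sWedge_count_small (k : ℕ) (hk : 1 ≤ k)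
    (s t : ℕ → ℕ) (R : ∀ n, Setoid (Fin (s n) × Fin (t n)))
    (C : ℕ) (hsC : ∀ n, s n ≤ C * n) (htC : ∀ n, t n ≤ C * n)
    -- (MP1)
    (hMP1 : Tendsto (fun n =>
        ((Finset.univ.sup (fun a : Fin (s n) =>
            {x : Fin (t n) × Fin (s n) × Fin (t n) |
              (R n).r (a, x.1) (x.2.1, x.2.2)}.ncard) : ℕ) : ℝ) / (n : ℝ) ^ 2)
        atTop (nhds 0))
    -- (MP2)
    (B : ℕ)
    (hMP2 : ∀ n (a : Fin (s n)) (q : Fin (t n)) (a' : Fin (s n)),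
        {q' : Fin (t n) | (R n).r (a, q) (a', q')}.ncard ≤ B)
    (hMP2' : ∀ n (a : Fin (s n)) (q q' : Fin (t n)),
        {a' : Fin (s n) | (R n).r (a, q) (a', q')}.ncard ≤ B)
    -- (MP3)
    (hMP3 : Tendsto (fun n =>
        ({x : Fin (s n) × Fin (t n) × Fin (t n) |
            x.2.1 ≠ x.2.2 ∧ (R n).r (x.1, x.2.1) (x.1, x.2.2)}.ncard : ℝ) / (n : ℝ) ^ 2)
        atTop (nhds 0))
    (hMP3' : Tendsto (fun n =>
        ({x : Fin (s n) × Fin (s n) × Fin (t n) |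
            x.1 ≠ x.2.1 ∧ (R n).r (x.1, x.2.2) (x.2.1, x.2.2)}.ncard : ℝ) / (n : ℝ) ^ 2)
        atTop (nhds 0))
    (p : Setoid (Fin (2 * k))) (hpair : IsPairPartition p) (hnc : IsNoncrossing p) :
    Tendsto (fun n =>
      ({fp : (Fin (2 * k) → Fin (s n)) × (Fin (2 * k) → Fin (t n)) |
          ((∀ i j, (mSetoid k).r i j → fp.1 i = fp.1 j) ∧
           (∀ i j, (nSetoid k).r i j → fp.2 i = fp.2 j) ∧
           (∀ i j, ((R n).r (fp.1 i, fp.2 i) (fp.1 j, fp.2 j) ↔ p.r i j))) ∧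
          ¬ ((∀ i j, (p ⊔ mSetoid k).r i j → fp.1 i = fp.1 j) ∧
             (∀ i j, (p ⊔ nSetoid k).r i j → fp.2 i = fp.2 j))}.ncard : ℝ)
        / (n : ℝ) ^ (k + 1)) atTop (nhds 0) := by
  have hlim := (hMP3.add hMP3').const_mul
    ((Fintype.card (Fin (2 * k) × Fin (2 * k)) : ℝ) * ((B + C + 1 : ℕ) : ℝ) ^ (2 * k))
  rw [add_zero, mul_zero] at hlim
  refine tendsto_of_tendsto_of_tendsto_of_le_of_le' tendsto_const_nhds hlim
    (Eventually.of_forall fun n => by positivity) ?_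
  filter_upwards [eventually_ge_atTop 1] with n hn
  have h := count_bad k hk (s n) (t n) n C B (R n) hn (hsC n) (htC n) (hMP2 n) (hMP2' n)
    p hpair hnc
  have hn0 : (0 : ℝ) < n := by exact_mod_cast hn
  have h' := (Nat.cast_le (α := ℝ)).mpr h
  rw [Nat.cast_mul, Nat.cast_mul, Nat.cast_mul, Nat.cast_mul, Nat.cast_add, Nat.cast_pow,
    Nat.cast_pow] at h'
  rw [← add_div, div_le_iff₀ (by positivity), ← mul_le_mul_iff_left₀ hn0]
  refine h'.trans (le_of_eq ?_)
  field_simp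
  ring
end

section
/- Let (m_k) be defined by m_k = ∑_{i=1}^{k} #NC^{(i)}(k)·κ^i for κ > 0. Then m_k is the k-th moment of the Marčenko–Pastur distribution max{0, 1−κ}·δ_0 + (√(4κ − (x−1−κ)²)/(2πx))·1_{[(1−√κ)², (1+√κ)²]}(x) dx. -/
open MeasureTheory

/-- The Marčenko–Pastur distribution with parameter `κ > 0`:
`max{0, 1-κ}·δ₀ + (√(4κ - (x-1-κ)²)/(2πx))·1_{[(1-√κ)², (1+√κ)²]}(x) dx`. -/
noncomputable def mpMeasure (κ : ℝ) : Measure ℝ :=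
  ENNReal.ofReal (max 0 (1 - κ)) • Measure.dirac 0 +
    volume.withDensity (fun x =>
      ENNReal.ofReal (Set.indicator
        (Set.Icc ((1 - Real.sqrt κ) ^ 2) ((1 + Real.sqrt κ) ^ 2))
        (fun y => Real.sqrt (4 * κ - (y - 1 - κ) ^ 2) / (2 * Real.pi * y)) x))

section comb
open Classical

/-- gluing map -/
def gmap (N m : ℕ) (x : Fin (N+1)) : Fin m ⊕ Fin (max 1 (N - m)) :=
  if h0 : x.val = 0 then Sum.inr ⟨0, by omega⟩
  else if h1 : x.val ≤ m then Sum.inl ⟨x.val - 1, by omega⟩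
  else Sum.inr ⟨x.val - 1 - m, by omega⟩

/-- sum of two setoids -/
def sumSetoid {α β : Type*} (a : Setoid α) (b : Setoid β) : Setoid (α ⊕ β) where
  r := Sum.LiftRel a.r b.r
  iseqv := by
    refine ⟨?_, ?_, ?_⟩
    · rintro (x | x)
      · exact Sum.LiftRel.inl (a.refl x)
      · exact Sum.LiftRel.inr (b.refl x)
    · rintro _ _ (h | h)
      · exact Sum.LiftRel.inl (a.symm h)
      · exact Sum.LiftRel.inr (b.symm h)
    · rintro _ _ _ (h | h) (h' | h')
      · exact Sum.LiftRel.inl (a.trans h h')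
      · exact Sum.LiftRel.inr (b.trans h h')

def glue (N m : ℕ) (a : Setoid (Fin m)) (b : Setoid (Fin (max 1 (N - m)))) :
    Setoid (Fin (N+1)) := Setoid.comap (gmap N m) (sumSetoid a b)

def resL (N m : ℕ) (hm : m ≤ N) (p : Setoid (Fin (N+1))) : Setoid (Fin m) :=
  Setoid.comap (fun i => (⟨i.val + 1, by omega⟩ : Fin (N+1))) p

def resR (N m : ℕ) (hm : m ≤ N) (p : Setoid (Fin (N+1))) : Setoid (Fin (max 1 (N - m))) :=
  Setoid.comap (fun i => if h : m < N then (⟨m + 1 + i.val, by omega⟩ : Fin (N+1)) else 0) p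

lemma sumSetoid_inl {α β : Type*} (a : Setoid α) (b : Setoid β) (x y : α) :
    (sumSetoid a b).r (Sum.inl x) (Sum.inl y) ↔ a.r x y := by
  show Sum.LiftRel _ _ _ _ ↔ _
  simp

lemma sumSetoid_inr {α β : Type*} (a : Setoid α) (b : Setoid β) (x y : β) :
    (sumSetoid a b).r (Sum.inr x) (Sum.inr y) ↔ b.r x y := by
  show Sum.LiftRel _ _ _ _ ↔ _
  simp

lemma sumSetoid_inl_inr {α β : Type*} (a : Setoid α) (b : Setoid β) (x : α) (y : β) :
    ¬ (sumSetoid a b).r (Sum.inl x) (Sum.inr y) := by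
  show ¬ Sum.LiftRel _ _ _ _
  simp

lemma sumSetoid_inr_inl {α β : Type*} (a : Setoid α) (b : Setoid β) (x : α) (y : β) :
    ¬ (sumSetoid a b).r (Sum.inr y) (Sum.inl x) := by
  show ¬ Sum.LiftRel _ _ _ _
  simp

lemma ncard_classes {α : Type*} (p : Setoid α) : p.classes.ncard = Nat.card (Quotient p) := by
  rw [← Nat.card_coe_set_eq]
  exact Nat.card_congr (Setoid.quotientEquivClasses p).symm

lemma card_quot_comap {α β : Type*} (f : α → β) (hf : Function.Surjective f) (s : Setoid β) :
    Nat.card (Quotient (Setoid.comap f s)) = Nat.card (Quotient s) := by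
  apply Nat.card_congr
  refine Equiv.ofBijective (Quotient.map' (s₁ := Setoid.comap f s) (s₂ := s) f (fun a b h => h)) ⟨?_, ?_⟩
  · rintro ⟨x⟩ ⟨y⟩ h
    exact Quotient.sound (s := Setoid.comap f s) (Quotient.exact (s := s) h)
  · rintro ⟨y⟩
    obtain ⟨x, rfl⟩ := hf y
    exact ⟨Quotient.mk _ x, rfl⟩

lemma card_quot_sum {α β : Type*} [Finite α] [Finite β] (a : Setoid α) (b : Setoid β) :
    Nat.card (Quotient (sumSetoid a b)) = Nat.card (Quotient a) + Nat.card (Quotient b) := by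
  rw [← Nat.card_sum]
  symm
  apply Nat.card_congr
  refine Equiv.ofBijective (Sum.elim
    (Quotient.map' (s₁ := a) (s₂ := sumSetoid a b) Sum.inl (fun x y h => (sumSetoid_inl a b x y).2 h))
    (Quotient.map' (s₁ := b) (s₂ := sumSetoid a b) Sum.inr (fun x y h => (sumSetoid_inr a b x y).2 h)))
    ⟨?_, ?_⟩
  · rintro (x | x) (y | y) h <;> induction x using Quotient.inductionOn <;>
      induction y using Quotient.inductionOn <;> rename_i x y
    · exact congrArg Sum.inl (Quotient.sound (s := a)
        ((sumSetoid_inl a b x y).1 (Quotient.exact (s := sumSetoid a b) h)))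
    · exact absurd (Quotient.exact (s := sumSetoid a b) h) (sumSetoid_inl_inr a b x y)
    · exact absurd (Quotient.exact (s := sumSetoid a b) h) (sumSetoid_inr_inl a b y x)
    · exact congrArg Sum.inr (Quotient.sound (s := b)
        ((sumSetoid_inr a b x y).1 (Quotient.exact (s := sumSetoid a b) h)))
  · rintro ⟨x | x⟩
    · exact ⟨Sum.inl (Quotient.mk _ x), rfl⟩
    · exact ⟨Sum.inr (Quotient.mk _ x), rfl⟩

lemma gmap_zero (N m : ℕ) (x : Fin (N+1)) (h : x.val = 0) :
    gmap N m x = Sum.inr ⟨0, by omega⟩ := by simp [gmap, h]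
lemma gmap_le (N m : ℕ) (x : Fin (N+1)) (h : x.val ≠ 0) (h1 : x.val ≤ m) :
    gmap N m x = Sum.inl ⟨x.val - 1, by omega⟩ := by simp [gmap, h, h1]
lemma gmap_gt (N m : ℕ) (x : Fin (N+1)) (h1 : ¬ x.val ≤ m) :
    gmap N m x = Sum.inr ⟨x.val - 1 - m, by omega⟩ := by
  have h : x.val ≠ 0 := by omega
  rw [gmap, dif_neg h, dif_neg h1]

lemma gmap_surj (N m : ℕ) (hm : m ≤ N) : Function.Surjective (gmap N m) := by
  rintro (⟨i, hi⟩ | ⟨i, hi⟩)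
  · refine ⟨⟨i+1, by omega⟩, ?_⟩
    rw [gmap_le _ _ _ (by simp) (by simpa using hi)]
    simp
  · by_cases h : m < N
    · refine ⟨⟨m+1+i, by omega⟩, ?_⟩
      rw [gmap_gt _ _ _ (by simp; omega)]
      congr 2
      simp only; omega
    · refine ⟨0, ?_⟩
      rw [gmap_zero _ _ _ (by simp)]
      congr 2; omega

lemma glue_card (N m : ℕ) (hm : m ≤ N) (a : Setoid (Fin m)) (b : Setoid (Fin (max 1 (N - m)))) :
    (glue N m a b).classes.ncard = a.classes.ncard + b.classes.ncard := by
  rw [ncard_classes, ncard_classes, ncard_classes, ← card_quot_sum]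
  exact card_quot_comap _ (gmap_surj N m hm) _

lemma resL_glue (N m : ℕ) (hm : m ≤ N) (a : Setoid (Fin m)) (b : Setoid (Fin (max 1 (N - m)))) :
    resL N m hm (glue N m a b) = a := by
  ext i j
  show (sumSetoid a b).r (gmap N m _) (gmap N m _) ↔ a.r i j
  rw [gmap_le _ _ _ (by simp) (by simp only; omega), gmap_le _ _ _ (by simp) (by simp only; omega),
    sumSetoid_inl]
  simp

lemma resR_glue (N m : ℕ) (hm : m ≤ N) (a : Setoid (Fin m)) (b : Setoid (Fin (max 1 (N - m)))) :
    resR N m hm (glue N m a b) = b := by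
  have key : ∀ i : Fin (max 1 (N-m)),
      gmap N m (if h : m < N then (⟨m + 1 + i.val, by omega⟩ : Fin (N+1)) else 0) = Sum.inr i := by
    intro i
    split_ifs with h
    · rw [gmap_gt _ _ _ (by simp; omega)]
      congr 1; ext; simp only; omega
    · rw [gmap_zero _ _ _ (by simp)]
      congr 1; ext; simp only; omega
  ext i j
  show (sumSetoid a b).r (gmap N m _) (gmap N m _) ↔ b.r i j
  rw [key, key, sumSetoid_inr]

lemma glue_nc (N m : ℕ) (a : Setoid (Fin m)) (b : Setoid (Fin (max 1 (N - m))))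
    (ha : IsNoncrossing a) (hb : IsNoncrossing b) : IsNoncrossing (glue N m a b) := by
  rintro ⟨p1, q1, p2, q2, h1, h2, h3, hp, hq, hn⟩
  change (sumSetoid a b).r (gmap N m _) (gmap N m _) at hp hq
  change ¬ (sumSetoid a b).r (gmap N m _) (gmap N m _) at hn
  rw [Fin.lt_def] at h1 h2 h3
  have cases : ∀ x : Fin (N+1), (x.val = 0) ∨ (x.val ≠ 0 ∧ x.val ≤ m) ∨ ¬ x.val ≤ m := by
    intro x; omega
  have e2 : p2.val ≠ 0 := by omega
  have e3 : q2.val ≠ 0 := by omega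
  have e4 : q1.val ≠ 0 := by omega
  by_cases c2 : p2.val ≤ m
  · rw [gmap_le _ _ p2 e2 c2] at hp
    have c1 : q1.val ≤ m := by omega
    have c0 : p1.val ≤ m := by omega
    rw [gmap_le _ _ q1 e4 c1] at hq hn
    by_cases z : p1.val = 0
    · rw [gmap_zero _ _ p1 z] at hp
      exact sumSetoid_inr_inl _ _ _ _ hp
    · rw [gmap_le _ _ p1 z c0] at hp hn
      by_cases c3 : q2.val ≤ m
      · rw [gmap_le _ _ q2 e3 c3] at hq
        rw [sumSetoid_inl] at hp hq hn
        exact ha ⟨_, _, _, _, by rw [Fin.lt_def]; simp only; omega,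
          by rw [Fin.lt_def]; simp only; omega, by rw [Fin.lt_def]; simp only; omega, hp, hq, hn⟩
      · rw [gmap_gt _ _ q2 c3] at hq
        exact sumSetoid_inl_inr _ _ _ _ hq
  · have c3 : ¬ q2.val ≤ m := by omega
    rw [gmap_gt _ _ p2 c2] at hp
    rw [gmap_gt _ _ q2 c3] at hq
    by_cases c1 : q1.val ≤ m
    · rw [gmap_le _ _ q1 e4 c1] at hq
      exact sumSetoid_inl_inr _ _ _ _ hq
    · rw [gmap_gt _ _ q1 c1] at hq hn
      by_cases z : p1.val = 0
      · rw [gmap_zero _ _ p1 z] at hp hn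
        rw [sumSetoid_inr] at hp hq hn
        by_cases w : q1.val - 1 - m = 0
        · apply hn
          simp only [w]
          exact b.refl _
        · exact hb ⟨_, _, _, _, by rw [Fin.lt_def]; simp only; omega,
            by rw [Fin.lt_def]; simp only; omega, by rw [Fin.lt_def]; simp only; omega, hp, hq, hn⟩
      · by_cases c0 : p1.val ≤ m
        · rw [gmap_le _ _ p1 z c0] at hp
          exact sumSetoid_inl_inr _ _ _ _ hp
        · rw [gmap_gt _ _ p1 c0] at hp hn
          rw [sumSetoid_inr] at hp hq hn
          exact hb ⟨_, _, _, _, by rw [Fin.lt_def]; simp only; omega,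
            by rw [Fin.lt_def]; simp only; omega, by rw [Fin.lt_def]; simp only; omega, hp, hq, hn⟩

lemma resL_nc (N m : ℕ) (hm : m ≤ N) (p : Setoid (Fin (N+1))) (hp : IsNoncrossing p) :
    IsNoncrossing (resL N m hm p) := by
  rintro ⟨p1, q1, p2, q2, h1, h2, h3, h⟩
  rw [Fin.lt_def] at h1 h2 h3
  refine hp ⟨_, _, _, _, ?_, ?_, ?_, h⟩ <;> (rw [Fin.lt_def]; simp only; omega)

lemma resR_nc (N m : ℕ) (hm : m ≤ N) (p : Setoid (Fin (N+1))) (hp : IsNoncrossing p) :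
    IsNoncrossing (resR N m hm p) := by
  rintro ⟨p1, q1, p2, q2, h1, h2, h3, h⟩
  rw [Fin.lt_def] at h1 h2 h3
  have hmN : m < N := by omega
  refine hp ⟨_, _, _, _, ?_, ?_, ?_, h⟩ <;>
    (beta_reduce; rw [dif_pos hmN, dif_pos hmN, Fin.lt_def]; simp only; omega)

/-- the gap after `0` in its block -/
def gapP (N : ℕ) (p : Setoid (Fin (N+1))) (m : ℕ) : Prop :=
  m = N ∨ ∃ h : m + 1 < N + 1, p.r 0 ⟨m+1, h⟩

lemma gap_ex (N : ℕ) (p : Setoid (Fin (N+1))) : ∃ m, gapP N p m := ⟨N, Or.inl rfl⟩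

noncomputable def gap (N : ℕ) (p : Setoid (Fin (N+1))) : ℕ := Nat.find (gap_ex N p)

lemma gap_le (N : ℕ) (p : Setoid (Fin (N+1))) : gap N p ≤ N := Nat.find_le (Or.inl rfl)

lemma gap_glue (N m : ℕ) (hm : m ≤ N) (a : Setoid (Fin m)) (b : Setoid (Fin (max 1 (N - m)))) :
    gap N (glue N m a b) = m := by
  rw [gap, Nat.find_eq_iff]
  constructor
  · by_cases h : m = N
    · exact Or.inl h
    · refine Or.inr ⟨by omega, ?_⟩
      show (sumSetoid a b).r (gmap N m _) (gmap N m _)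
      rw [gmap_zero _ _ _ (by simp), gmap_gt _ _ _ (by simp), sumSetoid_inr]
      simp only [Nat.add_sub_cancel, Nat.sub_self]
      exact b.refl _
  · rintro n hn (h | ⟨h, h'⟩)
    · omega
    · change (sumSetoid a b).r (gmap N m _) (gmap N m _) at h'
      rw [gmap_zero _ _ _ (by simp), gmap_le _ _ _ (by simp) (by simp; omega)] at h'
      exact sumSetoid_inr_inl _ _ _ _ h'

lemma glue_res (N m : ℕ) (hm : m ≤ N) (p : Setoid (Fin (N+1))) (hp : IsNoncrossing p)
    (hg : gap N p = m) : glue N m (resL N m hm p) (resR N m hm p) = p := by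
  rw [gap, Nat.find_eq_iff] at hg
  obtain ⟨hg1, hg2⟩ := hg
  have hlt : ∀ x : Fin (N+1), x.val ≠ 0 → x.val ≤ m → ¬ p.r 0 x := by
    intro x hx hxm h
    refine hg2 (x.val - 1) (by omega) (Or.inr ⟨by omega, ?_⟩)
    convert h using 1
    ext; simp only; omega
  have hcross : ∀ x y : Fin (N+1), x.val ≠ 0 → x.val ≤ m → ¬ y.val ≤ m → ¬ p.r x y := by
    intro x y hx hxm hy h
    rcases hg1 with hg1 | ⟨h1, h2⟩
    · omega
    · by_cases hy' : y.val = m + 1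
      · have : y = ⟨m+1, h1⟩ := Fin.ext hy'
        subst this
        exact hlt x hx hxm (p.trans h2 (p.symm h))
      · refine hp ⟨0, x, ⟨m+1, h1⟩, y, ?_, ?_, ?_, h2, h, hlt x hx hxm⟩ <;>
          rw [Fin.lt_def] <;> simp only [Fin.val_zero] <;> omega
  -- left/right representative
  have keyR : ∀ i : Fin (max 1 (N-m)), ∀ x : Fin (N+1), gmap N m x = Sum.inr i →
      p.r x (if h : m < N then (⟨m + 1 + i.val, by omega⟩ : Fin (N+1)) else 0) := by
    intro i x hx
    by_cases hx0 : x.val = 0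
    · have : x = 0 := Fin.ext hx0
      subst this
      rw [gmap_zero _ _ _ hx0, Sum.inr.injEq] at hx
      subst hx
      split_ifs with h
      · rcases hg1 with hg1 | ⟨h1, h2⟩
        · omega
        · exact h2
      · exact p.refl _
    · by_cases hxm : x.val ≤ m
      · rw [gmap_le _ _ _ hx0 hxm] at hx
        cases hx
      · rw [gmap_gt _ _ _ hxm, Sum.inr.injEq] at hx
        subst hx
        rw [dif_pos (by omega)]
        convert p.refl x using 1
        ext; simp only; omega
  have keyL : ∀ i : Fin m, ∀ x : Fin (N+1), gmap N m x = Sum.inl i →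
      x = ⟨i.val + 1, by omega⟩ := by
    intro i x hx
    by_cases hx0 : x.val = 0
    · rw [gmap_zero _ _ _ hx0] at hx
      cases hx
    · by_cases hxm : x.val ≤ m
      · rw [gmap_le _ _ _ hx0 hxm, Sum.inl.injEq] at hx
        subst hx
        ext; simp only; omega
      · rw [gmap_gt _ _ _ hxm] at hx
        cases hx
  have mixed : ∀ (i : Fin m) (j : Fin (max 1 (N-m))) (x y : Fin (N+1)), gmap N m x = Sum.inl i →
      gmap N m y = Sum.inr j → ¬ p.r x y := by
    intro i j x y hx hy h
    have hx' := keyL i x hx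
    have hx0 : x.val ≠ 0 := by rw [hx']; simp
    have hxm : x.val ≤ m := by rw [hx']; simp only; omega
    by_cases hy0 : y.val = 0
    · have : y = 0 := Fin.ext hy0
      subst this
      exact hlt x hx0 hxm (p.symm h)
    · by_cases hym : y.val ≤ m
      · rw [gmap_le _ _ _ hy0 hym] at hy
        cases hy
      · exact hcross x y hx0 hxm hym h
  ext x y
  show (sumSetoid _ _).r (gmap N m x) (gmap N m y) ↔ p.r x y
  rcases hx : gmap N m x with i | i <;> rcases hy : gmap N m y with j | j
  · rw [sumSetoid_inl, keyL i x hx, keyL j y hy]; rfl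
  · exact iff_of_false (sumSetoid_inl_inr _ _ _ _) (mixed i j x y hx hy)
  · exact iff_of_false (sumSetoid_inr_inl _ _ _ _) (fun h => mixed j i y x hy hx (p.symm h))
  · rw [sumSetoid_inr]
    have hx' := keyR i x hx
    have hy' := keyR j y hy
    constructor
    · intro h
      exact p.trans hx' (p.trans h (p.symm hy'))
    · intro h
      exact p.trans (p.symm hx') (p.trans h hy')

instance finSetoid (N : ℕ) : Finite (Setoid (Fin N)) :=
  Finite.of_injective (fun p : Setoid (Fin N) => p.r)
    (fun p q h => by ext x y; exact iff_of_eq (congrFun (congrFun h x) y))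

noncomputable def NCs (N : ℕ) : Finset (Setoid (Fin N)) :=
  (Set.toFinite {p : Setoid (Fin N) | IsNoncrossing p}).toFinset

lemma mem_NCs {N : ℕ} (p : Setoid (Fin N)) : p ∈ NCs N ↔ IsNoncrossing p := by simp [NCs]

noncomputable def PP (κ : ℝ) (N : ℕ) : ℝ := ∑ p ∈ NCs N, κ ^ p.classes.ncard

lemma PP_rec (κ : ℝ) (N : ℕ) :
    PP κ (N+1) = ∑ m ∈ Finset.range (N+1), PP κ m * PP κ (max 1 (N - m)) := by
  rw [PP, ← Finset.sum_fiberwise_of_maps_to (g := gap N) (t := Finset.range (N+1))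
    (fun p _ => Finset.mem_range.2 (Nat.lt_succ_of_le (gap_le N p)))]
  refine Finset.sum_congr rfl fun m hm => ?_
  have hm : m ≤ N := Nat.lt_succ_iff.1 (Finset.mem_range.1 hm)
  rw [PP, PP, Finset.sum_mul_sum, ← Finset.sum_product']
  refine Finset.sum_bij' (fun p _ => (resL N m hm p, resR N m hm p))
    (fun q _ => glue N m q.1 q.2) ?_ ?_ ?_ ?_ ?_
  · intro p hp
    rw [Finset.mem_filter, mem_NCs] at hp
    exact Finset.mem_product.2 ⟨(mem_NCs _).2 (resL_nc N m hm p hp.1),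
      (mem_NCs _).2 (resR_nc N m hm p hp.1)⟩
  · intro q hq
    rw [Finset.mem_product, mem_NCs, mem_NCs] at hq
    exact Finset.mem_filter.2 ⟨(mem_NCs _).2 (glue_nc N m _ _ hq.1 hq.2), gap_glue N m hm _ _⟩
  · intro p hp
    rw [Finset.mem_filter, mem_NCs] at hp
    exact glue_res N m hm p hp.1 hp.2
  · intro q hq
    exact Prod.ext (resL_glue N m hm _ _) (resR_glue N m hm _ _)
  · intro p hp
    rw [Finset.mem_filter, mem_NCs] at hp
    rw [← pow_add, ← glue_card N m hm, glue_res N m hm p hp.1 hp.2]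

lemma PP_small (κ : ℝ) (N : ℕ) (hN : N ≤ 1) : PP κ N = κ ^ N := by
  have hs : Subsingleton (Fin N) := Fin.subsingleton_iff_le_one.2 hN
  have : NCs N = {⊥} := by
    ext p
    rw [mem_NCs, Finset.mem_singleton]
    constructor
    · intro _
      ext x y
      rw [Subsingleton.elim x y]
      exact iff_of_true (p.refl y) ((⊥ : Setoid (Fin N)).refl y)
    · rintro rfl ⟨p1, q1, _, _, h, _⟩
      rw [Subsingleton.elim p1 q1] at h
      exact absurd h (lt_irrefl _)
  rw [PP, this, Finset.sum_singleton, ncard_classes]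
  congr 1
  rw [Nat.card_congr (Equiv.ofBijective (Quotient.mk (⊥ : Setoid (Fin N)))
    ⟨fun _ _ _ => Subsingleton.elim _ _, Quotient.mk_surjective⟩).symm, Nat.card_fin]

lemma PP_eq (κ : ℝ) (k : ℕ) (hk : 1 ≤ k) :
    ∑ i ∈ Finset.Icc 1 k,
          (Nat.card {q : Setoid (Fin k) // IsNoncrossing q ∧ q.classes.ncard = i} : ℝ)
            * κ ^ i = PP κ k := by
  rw [PP, ← Finset.sum_fiberwise_of_maps_to (g := fun p : Setoid (Fin k) => p.classes.ncard)
    (t := Finset.Icc 1 k)]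
  · refine Finset.sum_congr rfl fun i _ => ?_
    rw [Finset.sum_congr rfl (g := fun _ => κ ^ i)
      (fun p hp => by rw [(Finset.mem_filter.1 hp).2]), Finset.sum_const, nsmul_eq_mul]
    congr 2
    rw [← Nat.card_eq_finsetCard]
    exact Nat.card_congr (Equiv.subtypeEquivRight fun q => by
      rw [Finset.mem_filter, mem_NCs])
  · intro p _
    rw [ncard_classes, Finset.mem_Icc]
    constructor
    · have : Nonempty (Quotient p) := ⟨Quotient.mk _ ⟨0, hk⟩⟩
      exact Nat.card_pos
    · have := Nat.card_le_card_of_surjective (Quotient.mk p) Quotient.mk_surjective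
      rwa [Nat.card_fin] at this

end comb

lemma PP_linrec (κ : ℝ) (j : ℕ) :
    ((j:ℝ)+3) * PP κ (j+2) = (2*j+3)*(1+κ) * PP κ (j+1) - j * (1-κ)^2 * PP κ j := by
  set M : PowerSeries ℝ := PowerSeries.mk (PP κ) with hM
  have hM1 : M = 1 + PowerSeries.X * (M * (M - 1 + PowerSeries.C κ)) := by
    have hB : M - 1 + PowerSeries.C κ = PowerSeries.mk (fun n => PP κ (max 1 n)) := by
      ext n
      rcases n with _ | n
      · simp [hM, PP_small κ 0 (by norm_num), PP_small κ 1 le_rfl]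
      · simp [hM, PowerSeries.coeff_one, PowerSeries.coeff_C]
    rw [hB]
    ext n
    rcases n with _ | n
    · simp [hM, PP_small κ 0 (by norm_num)]
    · rw [map_add, PowerSeries.coeff_succ_X_mul, PowerSeries.coeff_mul,
        Finset.Nat.sum_antidiagonal_eq_sum_range_succ_mk, hM, PowerSeries.coeff_mk, PP_rec]
      simp [PowerSeries.coeff_one]
  set S : PowerSeries ℝ := 2 * (PowerSeries.X * M) + PowerSeries.X * PowerSeries.C (κ-1) - 1 with hS
  have hSS : S * S = 1 - PowerSeries.C (2*(1+κ)) * PowerSeries.X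
      + PowerSeries.C ((1-κ)^2) * PowerSeries.X^2 := by
    rw [hS]
    simp only [map_sub, map_add, map_mul, map_pow, map_one, map_ofNat]
    linear_combination (-4 * PowerSeries.X) * hM1
  have hd := congrArg (PowerSeries.derivative ℝ) hSS
  rw [Derivation.leibniz] at hd
  set S' := PowerSeries.derivative ℝ S with hS'
  have hd2 : (2:PowerSeries ℝ) * (S * S') = - PowerSeries.C (2*(1+κ))
      + PowerSeries.C ((1-κ)^2) * (2 * PowerSeries.X) := by
    have : PowerSeries.derivative ℝ (1 - PowerSeries.C (2*(1+κ)) * PowerSeries.X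
      + PowerSeries.C ((1-κ)^2) * PowerSeries.X^2) = - PowerSeries.C (2*(1+κ))
      + PowerSeries.C ((1-κ)^2) * (2 * PowerSeries.X) := by
      simp only [map_add, map_sub, Derivation.leibniz, Derivation.leibniz_pow, Derivation.map_one_eq_zero,
        PowerSeries.derivative_C, PowerSeries.derivative_X, smul_eq_mul, nsmul_eq_mul]
      push_cast
      ring
    rw [this] at hd
    rw [← hd]
    simp only [smul_eq_mul]
    ring
  have key : S' - PowerSeries.C (2*(1+κ)) * (PowerSeries.X * S')
      + PowerSeries.C ((1-κ)^2) * (PowerSeries.X * (PowerSeries.X * S'))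
      = - (PowerSeries.C (1+κ) * S) + PowerSeries.C ((1-κ)^2) * (PowerSeries.X * S) := by
    have h2 : (2 : PowerSeries ℝ) ≠ 0 := by
      intro h
      have := congrArg (PowerSeries.coeff 0) h
      rw [← map_ofNat (PowerSeries.C (R := ℝ)) 2, PowerSeries.coeff_zero_C] at this
      simp at this
    apply mul_left_cancel₀ h2
    simp only [map_sub, map_add, map_mul, map_pow, map_one, map_ofNat] at hd2 hSS ⊢
    linear_combination S * hd2 - 2 * S' * hSS
  have hs : ∀ n, PowerSeries.coeff (n+2) S = 2 * PP κ (n+1) := by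
    intro n
    have h2 : (2 : PowerSeries ℝ) = PowerSeries.C 2 := (map_ofNat _ 2).symm
    rw [hS, h2]
    simp [PowerSeries.coeff_succ_X_mul, PowerSeries.coeff_one, PowerSeries.coeff_C, hM, PowerSeries.coeff_C_mul]
  have hc := congrArg (PowerSeries.coeff (j+2)) key
  simp only [map_add, map_sub, map_neg, add_mul, PowerSeries.coeff_C_mul, PowerSeries.coeff_succ_X_mul] at hc
  rw [hS', PowerSeries.coeff_derivative, PowerSeries.coeff_derivative, PowerSeries.coeff_derivative, hs, hs] at hc
  rcases j with _ | j
  · simp only [Nat.cast_zero, zero_mul, zero_add, sub_zero] at hc ⊢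
    push_cast at hc
    linear_combination hc / 2
  · rw [hs] at hc
    push_cast at hc ⊢
    linear_combination hc / 2

section ana
open Real

noncomputable def AA (κ : ℝ) (j : ℕ) : ℝ :=
  ∫ x in ((1 - √κ)^2)..((1 + √κ)^2), x ^ j * √(4 * κ - (x - 1 - κ)^2)

lemma R_pos (κ : ℝ) (hκ : 0 < κ) (x : ℝ) (hx : x ∈ Set.Ioo ((1 - √κ)^2) ((1 + √κ)^2)) :
    0 < 4 * κ - (x - 1 - κ)^2 := by
  obtain ⟨h1, h2⟩ := hx
  have := Real.sq_sqrt hκ.le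
  nlinarith [mul_pos (sub_pos.2 h1) (sub_pos.2 h2)]

lemma ab_le (κ : ℝ) : (1 - √κ)^2 ≤ (1 + √κ)^2 := by
  nlinarith [Real.sqrt_nonneg κ]

lemma AA_rec (κ : ℝ) (hκ : 0 < κ) (j : ℕ) :
    ((j:ℝ)+3) * AA κ (j+1) = (2*j+3)*(1+κ) * AA κ j - j * (1-κ)^2 * AA κ (j-1) := by
  have h := intervalIntegral.integral_eq_sub_of_hasDerivAt_of_le
    (f := fun x => x^j * ((4 * κ - (x - 1 - κ)^2) * √(4 * κ - (x - 1 - κ)^2)))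
    (f' := fun x => (2*j+3)*(1+κ) * (x^j * √(4 * κ - (x - 1 - κ)^2))
      - j * (1-κ)^2 * (x^(j-1) * √(4 * κ - (x - 1 - κ)^2))
      - ((j:ℝ)+3) * (x^(j+1) * √(4 * κ - (x - 1 - κ)^2)))
    (ab_le κ) (by fun_prop) ?_ ((by fun_prop : Continuous _).intervalIntegrable _ _)
  · have hsq := Real.sq_sqrt hκ.le
    have e1 : 4 * κ - ((1 - √κ)^2 - 1 - κ)^2 = 0 := by
      linear_combination (-4 + 4 * √κ - (√κ^2 - κ)) * hsq
    have e2 : 4 * κ - ((1 + √κ)^2 - 1 - κ)^2 = 0 := by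
      linear_combination (-4 - 4 * √κ - (√κ^2 - κ)) * hsq
    rw [intervalIntegral.integral_sub, intervalIntegral.integral_sub] at h
    · simp only [intervalIntegral.integral_const_mul, e1, e2] at h
      simp only [AA]
      linarith
    all_goals exact (by fun_prop : Continuous _).intervalIntegrable _ _
  · intro x hx
    have hR := R_pos κ hκ x hx
    have hs : √(4 * κ - (x - 1 - κ)^2) ≠ 0 := (Real.sqrt_pos.2 hR).ne'
    have hss := Real.sq_sqrt hR.le
    have d1 : HasDerivAt (fun x : ℝ => 4 * κ - (x - 1 - κ)^2) (-(2 * (x - 1 - κ))) x := by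
      have := ((((hasDerivAt_id x).sub_const 1).sub_const κ).pow 2).const_sub (4*κ)
      simpa using this
    have d2 := (hasDerivAt_pow j x).mul (d1.mul (d1.sqrt hR.ne'))
    refine d2.congr_deriv ?_
    have e3 : (4 * κ - (x - 1 - κ)^2) * (-(2 * (x - 1 - κ)) / (2 * √(4 * κ - (x - 1 - κ)^2)))
        = -(x-1-κ) * √(4 * κ - (x - 1 - κ)^2) := by
      field_simp
      rw [hss]
    simp only [Pi.mul_apply]
    rw [e3]
    rcases j with _ | j
    · simp; ring
    · simp only [Nat.add_sub_cancel]
      push_cast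
      ring

lemma AA_zero (κ : ℝ) (hκ : 0 < κ) : AA κ 0 = 2 * π * κ := by
  have hs : 0 < √κ := Real.sqrt_pos.2 hκ
  have hsq := Real.sq_sqrt hκ.le
  have h := intervalIntegral.integral_comp_mul_add (a := -1) (b := 1)
    (fun x => √(4 * κ - (x - 1 - κ)^2)) (c := 2 * √κ) (by positivity) (1 + κ)
  have e : ∀ x : ℝ, √(4 * κ - (2 * √κ * x + (1+κ) - 1 - κ)^2) = 2 * √κ * √(1 - x^2) := by
    intro x
    have : 4 * κ - (2 * √κ * x + (1+κ) - 1 - κ)^2 = (2 * √κ)^2 * (1 - x^2) := by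
      linear_combination (-4) * hsq
    rw [this, Real.sqrt_mul (by positivity), Real.sqrt_sq (by positivity)]
  simp only [e] at h
  rw [intervalIntegral.integral_const_mul, integral_sqrt_one_sub_sq] at h
  have l1 : 2 * √κ * (-1) + (1+κ) = (1 - √κ)^2 := by linear_combination -hsq
  have l2 : 2 * √κ * 1 + (1+κ) = (1 + √κ)^2 := by linear_combination -hsq
  rw [l1, l2, smul_eq_mul] at h
  simp only [AA, pow_zero, one_mul]
  field_simp at h
  rw [hsq] at h
  linarith

lemma AA_PP (κ : ℝ) (hκ : 0 < κ) (n : ℕ) : AA κ n = 2 * π * PP κ (n+1) := by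
  induction n using Nat.strong_induction_on with
  | _ n ih =>
    rcases n with _ | n
    · rw [AA_zero κ hκ, PP_small κ 1 le_rfl, pow_one]
    · have h1 := AA_rec κ hκ n
      have h2 := PP_linrec κ n
      rw [ih n (by omega)] at h1
      have h3 : ((n:ℝ)+3) ≠ 0 := by positivity
      apply mul_left_cancel₀ h3
      rcases n with _ | n
      · simp only [Nat.cast_zero, zero_mul, zero_add, sub_zero] at h1 h2 ⊢
        linear_combination h1 - 2 * π * h2
      · rw [Nat.add_sub_cancel, ih n (by omega)] at h1
        linear_combination h1 - 2 * π * h2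

lemma mp_int (κ : ℝ) (hκ : 0 < κ) (n : ℕ) :
    ∫ x, x ^ (n+1) ∂(mpMeasure κ) = (2 * π)⁻¹ * AA κ n := by
  set F : ℝ → ℝ := Set.indicator
        (Set.Icc ((1 - Real.sqrt κ) ^ 2) ((1 + Real.sqrt κ) ^ 2))
        (fun y => Real.sqrt (4 * κ - (y - 1 - κ) ^ 2) / (2 * Real.pi * y)) with hF
  have hFm : Measurable F := by
    apply Measurable.indicator _ measurableSet_Icc
    fun_prop
  have hF0 : ∀ x, 0 ≤ F x := by
    intro x
    apply Set.indicator_nonneg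
    intro y hy
    have : 0 ≤ y := (sq_nonneg _).trans hy.1
    positivity
  have hmul : ∀ x, x ≠ 0 → (ENNReal.ofReal (F x)).toReal • x^(n+1) =
      Set.indicator (Set.Icc ((1 - Real.sqrt κ) ^ 2) ((1 + Real.sqrt κ) ^ 2))
        (fun x => (2 * π)⁻¹ * (x ^ n * √(4 * κ - (x - 1 - κ)^2))) x := by
    intro x hx
    rw [ENNReal.toReal_ofReal (hF0 x), hF, smul_eq_mul]
    by_cases hm : x ∈ Set.Icc ((1 - Real.sqrt κ) ^ 2) ((1 + Real.sqrt κ) ^ 2)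
    · rw [Set.indicator_of_mem hm, Set.indicator_of_mem hm]
      have := Real.pi_ne_zero
      field_simp
      ring
    · rw [Set.indicator_of_notMem hm, Set.indicator_of_notMem hm, zero_mul]
  have hae : (fun x => (ENNReal.ofReal (F x)).toReal • x^(n+1)) =ᵐ[volume]
      Set.indicator (Set.Icc ((1 - Real.sqrt κ) ^ 2) ((1 + Real.sqrt κ) ^ 2))
        (fun x => (2 * π)⁻¹ * (x ^ n * √(4 * κ - (x - 1 - κ)^2))) := by
    have : ∀ᵐ x : ℝ ∂volume, x ≠ 0 := by simp [ae_iff]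
    filter_upwards [this] with x hx
    exact hmul x hx
  have hInt : Integrable (fun x : ℝ => x^(n+1)) (volume.withDensity (fun x => ENNReal.ofReal (F x))) := by
    rw [integrable_withDensity_iff_integrable_smul' (by fun_prop) (by simp)]
    rw [integrable_congr hae, integrable_indicator_iff measurableSet_Icc]
    exact (by fun_prop : Continuous _).integrableOn_Icc
  have hdir : Integrable (fun x : ℝ => x^(n+1)) (ENNReal.ofReal (max 0 (1 - κ)) • Measure.dirac 0) := by
    apply Integrable.smul_measure _ (by simp)
    exact integrable_dirac (by simp)
  rw [mpMeasure, integral_add_measure hdir hInt, integral_smul_measure, integral_dirac,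
    integral_withDensity_eq_integral_toReal_smul (by fun_prop) (by simp), integral_congr_ae hae,
    integral_indicator measurableSet_Icc, integral_Icc_eq_integral_Ioc,
    ← intervalIntegral.integral_of_le (ab_le κ), intervalIntegral.integral_const_mul]
  simp [AA]

end ana

/-- `m_k = ∑_{i=1}^{k} #NC^{(i)}(k)·κ^i` is the `k`-th moment of the Marčenko–Pastur
distribution with parameter `κ`. -/
theorem mp_moments (κ : ℝ) (hκ : 0 < κ) (k : ℕ) (hk : 1 ≤ k) :
    ∫ x, x ^ k ∂(mpMeasure κ)
      = ∑ i ∈ Finset.Icc 1 k,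
          (Nat.card {q : Setoid (Fin k) // IsNoncrossing q ∧ q.classes.ncard = i} : ℝ)
            * κ ^ i := by
  rw [PP_eq κ k hk]
  obtain ⟨n, rfl⟩ : ∃ n, k = n + 1 := ⟨k - 1, by omega⟩
  rw [mp_int κ hκ, AA_PP κ hκ]
  have := Real.pi_ne_zero
  field_simp
end
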